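/- Every maximal outerplanar graph (the graph of a triangulated simple polygon: the polygon's cycle on n ≥ 3 vertices plus a maximal set of non-crossing diagonals) is properly 3-colorable. -/

import Mathlib

open scoped Classical

noncomputable section

/-- A simple polygon with `n` vertices: a closed polygonal region in the plane bounded by a
non-self-intersecting closed polygonal chain on the vertices. -/
structure SimplePolygon (n : ℕ) [NeZero n] where
  vertex : Fin n → ℝ × ℝ
  inj : Function.Injective vertex
  region : Set (ℝ × ℝ)
  compact : IsCompact region
  vertex_mem : ∀ i, vertex i ∈ region
  nondeg : 3 ≤ n
  /-- the boundary chain is non-self-intersecting: non-adjacent edges are disjoint -/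
  edges_noncross : ∀ i j : Fin n, i ≠ j → i + 1 ≠ j → j + 1 ≠ i →
    segment ℝ (vertex i) (vertex (i + 1)) ∩ segment ℝ (vertex j) (vertex (j + 1)) = ∅
  /-- the polygon sides form the boundary of the region -/
  edges_boundary : ∀ i : Fin n, segment ℝ (vertex i) (vertex (i + 1)) ⊆ frontier region
  frontier_sub : frontier region ⊆ ⋃ i : Fin n, segment ℝ (vertex i) (vertex (i + 1))

variable {n : ℕ} [NeZero n]

/-- The closed triangle spanned by three polygon vertices. -/
def SimplePolygon.tri (P : SimplePolygon n) (t : Fin n × Fin n × Fin n) : Set (ℝ × ℝ) :=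
  convexHull ℝ {P.vertex t.1, P.vertex t.2.1, P.vertex t.2.2}

/-- The set of (indices of) vertices of a triangle. -/
def triVerts (t : Fin n × Fin n × Fin n) : Set (Fin n) := {t.1, t.2.1, t.2.2}

/-- A diagonal: a segment between two polygon vertices whose interior lies strictly inside
the polygon. -/
def SimplePolygon.IsDiagonal (P : SimplePolygon n) (i j : Fin n) : Prop :=
  i ≠ j ∧ openSegment ℝ (P.vertex i) (P.vertex j) ⊆ interior P.region

/-- A valid side of a triangle in a triangulation: either a polygon side or a diagonal. -/
def SimplePolygon.sideOk (P : SimplePolygon n) (i j : Fin n) : Prop :=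
  j = i + 1 ∨ i = j + 1 ∨ P.IsDiagonal i j

/-- A triangulation of a simple polygon: a decomposition of the region into triangles with
pairwise disjoint interiors, whose vertices are polygon vertices and whose sides are polygon
sides or pairwise non-crossing diagonals (a maximal such family: every piece is a triangle). -/
structure Triangulation (P : SimplePolygon n) where
  tris : Finset (Fin n × Fin n × Fin n)
  distinct : ∀ t ∈ tris, t.1 ≠ t.2.1 ∧ t.2.1 ≠ t.2.2 ∧ t.1 ≠ t.2.2
  covers : ⋃ t ∈ tris, P.tri t = P.region
  int_disjoint : ∀ t ∈ tris, ∀ s ∈ tris, t ≠ s →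
    interior (P.tri t) ∩ interior (P.tri s) = ∅
  sides : ∀ t ∈ tris, P.sideOk t.1 t.2.1 ∧ P.sideOk t.2.1 t.2.2 ∧ P.sideOk t.1 t.2.2

/-- The graph of a triangulated simple polygon: the polygon's cycle plus the triangulation
diagonals (equivalently, edges between any two vertices of a common triangle). -/
def polyGraph {P : SimplePolygon n} (T : Triangulation P) : SimpleGraph (Fin n) :=
  SimpleGraph.fromRel (fun i j =>
    j = i + 1 ∨ ∃ t ∈ T.tris, i ∈ triVerts t ∧ j ∈ triVerts t)


/-- View a plane point as a complex number. -/
def cx (x : ℝ × ℝ) : ℂ := ⟨x.1, x.2⟩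

def ratio (p q x : ℝ × ℝ) : ℂ := (cx q - cx x) / (cx p - cx x)

/-- signed angle under which the segment `p q` is seen from `x`. -/
def ang (p q x : ℝ × ℝ) : ℝ := (ratio p q x).arg

def side (p q x : ℝ × ℝ) : ℝ := (p.1 - x.1) * (q.2 - x.2) - (p.2 - x.2) * (q.1 - x.1)

def dotp (p q x : ℝ × ℝ) : ℝ := (p.1 - x.1) * (q.1 - x.1) + (p.2 - x.2) * (q.2 - x.2)

lemma cx_inj {x y : ℝ × ℝ} (h : cx x = cx y) : x = y := by
  have h1 := congrArg Complex.re h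
  have h2 := congrArg Complex.im h
  exact Prod.ext h1 h2

lemma cx_sub_ne {x y : ℝ × ℝ} (h : x ≠ y) : cx x - cx y ≠ 0 :=
  fun h' => h (cx_inj (sub_eq_zero.mp h'))

lemma continuous_cx : Continuous cx := by
  have : cx = fun x : ℝ × ℝ => (x.1 : ℂ) + (x.2 : ℂ) * Complex.I := by
    funext x
    apply Complex.ext <;> simp [cx]
  rw [this]
  fun_prop

lemma ratio_im (p q x : ℝ × ℝ) :
    (ratio p q x).im = side p q x / Complex.normSq (cx p - cx x) := by
  simp only [ratio, Complex.div_im, side, cx, Complex.sub_re, Complex.sub_im]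
  ring

lemma ratio_re (p q x : ℝ × ℝ) :
    (ratio p q x).re = dotp p q x / Complex.normSq (cx p - cx x) := by
  simp only [ratio, Complex.div_re, dotp, cx, Complex.sub_re, Complex.sub_im]
  ring

lemma mem_segment_of_side {p q x : ℝ × ℝ} (h0 : side p q x = 0) (h1 : dotp p q x ≤ 0) :
    x ∈ segment ℝ p q := by
  by_cases hp : p = x
  · subst hp
    exact left_mem_segment ℝ _ _
  have hpos : 0 < Complex.normSq (cx p - cx x) := Complex.normSq_pos.mpr (cx_sub_ne hp)
  set r : ℝ := dotp p q x / Complex.normSq (cx p - cx x) with hr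
  have hr0 : r ≤ 0 := div_nonpos_of_nonpos_of_nonneg h1 hpos.le
  have hre : ratio p q x = (r : ℂ) := by
    apply Complex.ext
    · rw [ratio_re]; simp [hr]
    · rw [ratio_im, h0]; simp
  rw [ratio, div_eq_iff (cx_sub_ne hp)] at hre
  have e1 := congrArg Complex.re hre
  have e2 := congrArg Complex.im hre
  simp [cx] at e1 e2
  have h1r : (1 - r) ≠ 0 := by linarith
  refine ⟨-r / (1 - r), 1 / (1 - r), div_nonneg (by linarith) (by linarith),
    div_nonneg (by linarith) (by linarith), by field_simp; ring, ?_⟩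
  apply Prod.ext
  · simp
    field_simp
    linarith
  · simp
    field_simp
    linarith

lemma continuousAt_ratio {p q x : ℝ × ℝ} (h : x ≠ p) : ContinuousAt (ratio p q) x := by
  unfold ratio
  have := continuous_cx
  apply ContinuousAt.div
  · fun_prop
  · fun_prop
  · exact cx_sub_ne h.symm

lemma ratio_slit {p q x : ℝ × ℝ} (h : x ∉ segment ℝ p q) :
    ratio p q x ∈ Complex.slitPlane := by
  rw [Complex.mem_slitPlane_iff]
  by_contra hc
  push Not at hc
  have hp : p ≠ x := by
    rintro rfl
    exact h (left_mem_segment ℝ _ _)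
  have hpos : 0 < Complex.normSq (cx p - cx x) := Complex.normSq_pos.mpr (cx_sub_ne hp)
  apply h
  rw [ratio_re, ratio_im] at hc
  apply mem_segment_of_side
  · rcases div_eq_zero_iff.mp hc.2 with h | h
    · exact h
    · linarith
  · by_contra h'
    push Not at h'
    linarith [div_pos h' hpos]

lemma continuousAt_ang {p q x : ℝ × ℝ} (h : x ∉ segment ℝ p q) : ContinuousAt (ang p q) x := by
  have hp : x ≠ p := by
    rintro rfl
    exact h (left_mem_segment ℝ _ _)
  exact (Complex.continuousAt_arg (ratio_slit h)).comp (continuousAt_ratio hp)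

lemma ang_swap {p q x : ℝ × ℝ} (h : x ∉ segment ℝ p q) : ang q p x = - ang p q x := by
  have : ratio q p x = (ratio p q x)⁻¹ := by simp [ratio]
  rw [ang, this, Complex.arg_inv, if_neg, ang]
  exact Complex.slitPlane_arg_ne_pi (ratio_slit h)

lemma ang_coe {p q x : ℝ × ℝ} (hp : x ≠ p) (hq : x ≠ q) :
    (ang p q x : Real.Angle) = ((cx q - cx x).arg : Real.Angle) - ((cx p - cx x).arg : Real.Angle) :=
  Complex.arg_div_coe_angle (cx_sub_ne hq.symm) (cx_sub_ne hp.symm)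

lemma const_of_coe_zero {S : Set (ℝ × ℝ)} (hS : IsPreconnected S) {f : ℝ × ℝ → ℝ}
    (hf : ContinuousOn f S) (h0 : ∀ x ∈ S, (f x : Real.Angle) = 0) {x y : ℝ × ℝ}
    (hx : x ∈ S) (hy : y ∈ S) : f x = f y := by
  have hd : IsDiscrete ((AddSubgroup.zmultiples (2 * Real.pi) : AddSubgroup ℝ) : Set ℝ) :=
    ⟨inferInstanceAs (DiscreteTopology (AddSubgroup.zmultiples (2 * Real.pi)))⟩
  refine hS.constant_of_mapsTo hd hf ?_ hx hy
  intro z hz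
  have := h0 z hz
  rw [← Real.Angle.coe_zero, Real.Angle.angle_eq_iff_two_pi_dvd_sub] at this
  obtain ⟨k, hk⟩ := this
  refine AddSubgroup.mem_zmultiples_iff.mpr ⟨k, ?_⟩
  simp at hk ⊢
  linarith

lemma continuous_side (p q : ℝ × ℝ) : Continuous (side p q) := by unfold side; fun_prop
lemma continuous_dotp (p q : ℝ × ℝ) : Continuous (dotp p q) := by unfold dotp; fun_prop

lemma side_swap (p q x : ℝ × ℝ) : side q p x = - side p q x := by unfold side; ring

lemma dotp_neg {p q z : ℝ × ℝ} (hpq : p ≠ q) (hz : z ∈ openSegment ℝ p q) : dotp p q z < 0 := by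
  obtain ⟨a, b, ha, hb, hab, rfl⟩ := hz
  obtain rfl : a = 1 - b := by linarith
  have : 0 < (p.1 - q.1) ^ 2 + (p.2 - q.2) ^ 2 := by
    by_contra hc
    apply hpq
    apply Prod.ext <;> nlinarith [sq_nonneg (p.1 - q.1), sq_nonneg (p.2 - q.2)]
  have e : dotp p q ((1 - b) • p + b • q) =
      - ((1 - b) * b * ((p.1 - q.1) ^ 2 + (p.2 - q.2) ^ 2)) := by
    simp [dotp]; ring
  rw [e]
  have := mul_pos (mul_pos ha hb) this
  linarith

lemma side_zero {p q z : ℝ × ℝ} (hz : z ∈ segment ℝ p q) : side p q z = 0 := by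
  obtain ⟨a, b, ha, hb, hab, rfl⟩ := hz
  obtain rfl : a = 1 - b := by linarith
  simp [side]; ring

lemma mem_closure_side {p q z : ℝ × ℝ} (hpq : p ≠ q) (hz : z ∈ segment ℝ p q) :
    z ∈ closure {x | 0 < side p q x} := by
  have h0 : 0 < (p.1 - q.1) ^ 2 + (p.2 - q.2) ^ 2 := by
    by_contra hc
    apply hpq
    apply Prod.ext <;> nlinarith [sq_nonneg (p.1 - q.1), sq_nonneg (p.2 - q.2)]
  have hs := side_zero hz
  let w : ℝ × ℝ := (p.2 - q.2, q.1 - p.1)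
  have hc : Continuous (fun t : ℝ => z + t • w) := by fun_prop
  have hl : Filter.Tendsto (fun t : ℝ => z + t • w) (nhdsWithin 0 (Set.Ioi 0)) (nhds z) := by
    have := (hc.tendsto 0).mono_left (nhdsWithin_le_nhds (s := Set.Ioi 0))
    simpa using this
  refine mem_closure_of_tendsto hl ?_
  filter_upwards [self_mem_nhdsWithin] with t ht
  have e : side p q (z + t • w) = side p q z + t * ((p.1 - q.1) ^ 2 + (p.2 - q.2) ^ 2) := by
    simp [side, w]; ring
  show 0 < side p q (z + t • w)
  rw [e, hs, zero_add]
  exact mul_pos ht h0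

lemma jump {f : ℝ × ℝ → ℝ} {p q z : ℝ × ℝ} (hpq : p ≠ q) (hz : z ∈ openSegment ℝ p q)
    (hf : ∀ᶠ x in nhds z, ContinuousAt f x ∧ ((f x + ang p q x : ℝ) : Real.Angle) = 0) :
    ∃ c, ∀ᶠ x in nhds z, (0 < side p q x → f x + ang p q x = c) ∧
      (side p q x < 0 → f x + ang p q x = c - 2 * Real.pi) ∧
      (side p q x = 0 → x ∈ segment ℝ p q) := by
  have hd : ∀ᶠ x in nhds z, dotp p q x < 0 :=
    (continuous_dotp p q).continuousAt.eventually_lt continuousAt_const (dotp_neg hpq hz)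
  obtain ⟨r, hr, hB⟩ := Metric.eventually_nhds_iff_ball.mp (hf.and hd)
  let g : ℝ × ℝ → ℝ := fun x => f x + ((-(ratio p q x)).arg + Real.pi)
  have hne : ∀ x ∈ Metric.ball z r, x ≠ p ∧ x ≠ q := by
    intro x hx
    have := (hB x hx).2
    constructor
    · rintro rfl
      simp [dotp] at this
    · rintro rfl
      simp [dotp] at this
  have hre : ∀ x ∈ Metric.ball z r, (ratio p q x).re < 0 := by
    intro x hx
    rw [ratio_re]
    exact div_neg_of_neg_of_pos (hB x hx).2
      (Complex.normSq_pos.mpr (cx_sub_ne (hne x hx).1.symm))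
  have hconst : ∀ x ∈ Metric.ball z r, g x = g z := by
    intro x hx
    refine const_of_coe_zero (convex_ball z r).isPreconnected ?_ ?_ hx (Metric.mem_ball_self hr)
    · intro y hy
      apply ContinuousAt.continuousWithinAt
      refine (hB y hy).1.1.add (ContinuousAt.add ?_ continuousAt_const)
      have hs : -(ratio p q y) ∈ Complex.slitPlane := by
        rw [Complex.mem_slitPlane_iff]
        left
        have := hre y hy
        simp; exact this
      exact ContinuousAt.comp (f := fun y => -(ratio p q y)) (Complex.continuousAt_arg hs)
        (continuousAt_ratio (hne y hy).1).neg
    · intro y hy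
      have h1 := (hB y hy).1.2
      have hn : ratio p q y ≠ 0 := by
        intro h
        have := hre y hy
        rw [h] at this
        simp at this
      simp only [g, Real.Angle.coe_add, Complex.arg_neg_coe_angle hn]
      rw [Real.Angle.coe_add] at h1
      rw [add_assoc, Real.Angle.coe_pi_add_coe_pi, add_zero]
      exact h1
  refine ⟨g z, ?_⟩
  filter_upwards [Metric.ball_mem_nhds z hr] with x hx
  have hpos := Complex.normSq_pos.mpr (cx_sub_ne (hne x hx).1.symm)
  refine ⟨fun hs => ?_, fun hs => ?_, fun hs => mem_segment_of_side hs (hB x hx).2.le⟩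
  · rw [← hconst x hx]
    have : 0 < (ratio p q x).im := by rw [ratio_im]; exact div_pos hs hpos
    simp only [g, ang, Complex.arg_neg_eq_arg_sub_pi_of_im_pos this]
    ring
  · rw [← hconst x hx]
    have : (ratio p q x).im < 0 := by rw [ratio_im]; exact div_neg_of_neg_of_pos hs hpos
    simp only [g, ang, Complex.arg_neg_eq_arg_add_pi_of_im_neg this]
    ring

/-- total angle swept along the chain `v lo, …, v hi`, seen from `x` -/
def chainAng (v : ℕ → ℝ × ℝ) (lo hi : ℕ) (x : ℝ × ℝ) : ℝ :=
  ∑ k ∈ Finset.Ico lo hi, ang (v k) (v (k + 1)) x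

/-- `2π` times the winding number of the chain closed up by the segment `v hi, v lo` -/
def wnd (v : ℕ → ℝ × ℝ) (lo hi : ℕ) (x : ℝ × ℝ) : ℝ :=
  chainAng v lo hi x + ang (v hi) (v lo) x

lemma chainAng_coe {v : ℕ → ℝ × ℝ} {lo hi : ℕ} (hl : lo ≤ hi) {x : ℝ × ℝ}
    (hx : ∀ k, lo ≤ k → k ≤ hi → x ≠ v k) :
    (chainAng v lo hi x : Real.Angle) =
      ((cx (v hi) - cx x).arg : Real.Angle) - ((cx (v lo) - cx x).arg : Real.Angle) := by
  induction hi, hl using Nat.le_induction with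
  | base => simp [chainAng]
  | succ m hm ih =>
    have : chainAng v lo (m + 1) x = chainAng v lo m x + ang (v m) (v (m + 1)) x :=
      Finset.sum_Ico_succ_top hm _
    rw [this, Real.Angle.coe_add, ih (fun k h1 h2 => hx k h1 (by omega)),
      ang_coe (hx m hm (by omega)) (hx (m + 1) (by omega) le_rfl)]
    abel

lemma chainAng_cont {v : ℕ → ℝ × ℝ} {lo hi : ℕ} {x : ℝ × ℝ}
    (hx : ∀ k, lo ≤ k → k < hi → x ∉ segment ℝ (v k) (v (k + 1))) :
    ContinuousAt (chainAng v lo hi) x := by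
  unfold chainAng
  refine tendsto_finsetSum _ fun k hk => ?_
  rw [Finset.mem_Ico] at hk
  exact continuousAt_ang (hx k hk.1 hk.2)

/-- the closed polygon on which `wnd` is not locally constant -/
def offLoop (v : ℕ → ℝ × ℝ) (lo hi : ℕ) (x : ℝ × ℝ) : Prop :=
  (∀ k, lo ≤ k → k < hi → x ∉ segment ℝ (v k) (v (k + 1))) ∧ x ∉ segment ℝ (v hi) (v lo)

lemma wnd_const {v : ℕ → ℝ × ℝ} {lo hi : ℕ} (hl : lo < hi) {S : Set (ℝ × ℝ)}
    (hS : IsPreconnected S) (hoff : ∀ x ∈ S, offLoop v lo hi x) {x y : ℝ × ℝ}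
    (hx : x ∈ S) (hy : y ∈ S) : wnd v lo hi x = wnd v lo hi y := by
  refine const_of_coe_zero hS ?_ ?_ hx hy
  · intro z hz
    exact ((chainAng_cont (hoff z hz).1).add (continuousAt_ang (hoff z hz).2)).continuousWithinAt
  · intro z hz
    obtain ⟨h1, h2⟩ := hoff z hz
    have hv : ∀ k, lo ≤ k → k ≤ hi → z ≠ v k := by
      rintro k hk1 hk2 rfl
      rcases hk2.lt_or_eq with h | rfl
      · exact h1 k hk1 h (left_mem_segment ℝ _ _)
      · exact h2 (left_mem_segment ℝ _ _)
    rw [wnd, Real.Angle.coe_add, chainAng_coe hl.le hv,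
      ang_coe (hv hi hl.le le_rfl) (hv lo le_rfl hl.le)]
    abel

structure Good (n : ℕ) (v : ℕ → ℝ × ℝ) (R : Set (ℝ × ℝ)) : Prop where
  four : 4 ≤ n
  per : ∀ k, v (k + n) = v k
  inj : ∀ i j, i < j → j < i + n → v i ≠ v j
  non : ∀ i j, i + 1 < j → j + 1 < i + n → ∀ x, x ∈ segment ℝ (v i) (v (i + 1)) →
    x ∉ segment ℝ (v j) (v (j + 1))
  closed : IsClosed R
  fr : ∀ k, segment ℝ (v k) (v (k + 1)) ⊆ frontier R
  fr' : ∀ a x, x ∈ frontier R → ∃ k, a ≤ k ∧ k < a + n ∧ x ∈ segment ℝ (v k) (v (k + 1))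

namespace Good

variable {n : ℕ} {v : ℕ → ℝ × ℝ} {R : Set (ℝ × ℝ)}

lemma vert (G : Good n v R) {i j : ℕ} (h1 : i + 1 < j) (h2 : j < i + n) :
    v j ∉ segment ℝ (v i) (v (i + 1)) := by
  intro h
  have := G.four
  by_cases h3 : j + 1 < i + n
  · exact G.non i j h1 h3 _ h (left_mem_segment ℝ _ _)
  · obtain ⟨m, rfl⟩ : ∃ m, j = m + 1 := ⟨j - 1, by omega⟩
    exact G.non i m (by omega) (by omega) _ h (right_mem_segment ℝ _ _)

lemma overlap {p a b z : ℝ × ℝ} (ha : z ∈ segment ℝ a p) (hb : z ∈ segment ℝ p b) (hz : z ≠ p) :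
    a ∈ segment ℝ p b ∨ b ∈ segment ℝ a p := by
  have key : ∀ a b : ℝ × ℝ, ∀ s t : ℝ, 0 < s → s ≤ 1 → 0 < t → t ≤ s →
      p + s • (a - p) = p + t • (b - p) → a ∈ segment ℝ p b := by
    intro a b s t hs hs1 ht hts h
    refine ⟨1 - t / s, t / s, ?_, by positivity, by ring, ?_⟩
    · rw [sub_nonneg, div_le_one hs]; exact hts
    · have h1 := congrArg Prod.fst h
      have h2 := congrArg Prod.snd h
      simp at h1 h2
      apply Prod.ext
      · simp; field_simp; linarith
      · simp; field_simp; linarith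
  rw [segment_symm] at ha
  rw [segment_eq_image'] at ha hb
  obtain ⟨s, ⟨hs0, hs1⟩, hs⟩ := ha
  obtain ⟨t, ⟨ht0, ht1⟩, ht⟩ := hb
  simp only at hs ht
  have hs' : 0 < s := by
    rcases hs0.lt_or_eq with h | rfl
    · exact h
    · simp at hs; exact absurd hs.symm hz
  have ht' : 0 < t := by
    rcases ht0.lt_or_eq with h | rfl
    · exact h
    · simp at ht; exact absurd ht.symm hz
  rcases le_total t s with h | h
  · left; exact key a b s t hs' hs1 ht' h (by rw [hs, ht])
  · right; rw [segment_symm]; exact key b a t s ht' ht1 hs' h (by rw [hs, ht])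

lemma adj (G : Good n v R) {k : ℕ} {z : ℝ × ℝ} (h1 : z ∈ segment ℝ (v k) (v (k + 1)))
    (h2 : z ∈ segment ℝ (v (k + 1)) (v (k + 1 + 1))) : z = v (k + 1) := by
  by_contra hz
  have := G.four
  rcases overlap h1 h2 hz with h | h
  · rw [← G.per k] at h
    exact G.vert (by omega) (by omega) h
  · exact G.vert (by omega) (by omega) h

lemma per_seg (G : Good n v R) (k : ℕ) :
    segment ℝ (v (k + n)) (v (k + n + 1)) = segment ℝ (v k) (v (k + 1)) := by
  rw [G.per, show k + n + 1 = k + 1 + n by ring, G.per]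

lemma uniq' (G : Good n v R) {j k : ℕ} {z : ℝ × ℝ} (hz : z ∉ Set.range v) (hjk : j < k)
    (hk : k < j + n) (h1 : z ∈ segment ℝ (v j) (v (j + 1)))
    (h2 : z ∈ segment ℝ (v k) (v (k + 1))) : False := by
  by_cases e1 : k = j + 1
  · subst e1
    exact hz ⟨_, (G.adj h1 h2).symm⟩
  by_cases e2 : k + 1 = j + n
  · rw [← G.per_seg, ← e2] at h1
    exact hz ⟨_, (G.adj h2 h1).symm⟩
  · exact G.non j k (by omega) (by omega) z h1 h2

lemma uniq (G : Good n v R) {a j k : ℕ} {z : ℝ × ℝ} (hz : z ∉ Set.range v) (haj : a ≤ j)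
    (hj : j < a + n) (hak : a ≤ k) (hk : k < a + n) (h1 : z ∈ segment ℝ (v j) (v (j + 1)))
    (h2 : z ∈ segment ℝ (v k) (v (k + 1))) : j = k := by
  rcases lt_trichotomy j k with h | h | h
  · exact (G.uniq' hz h (by omega) h1 h2).elim
  · exact h
  · exact (G.uniq' hz h (by omega) h2 h1).elim

end Good

lemma isClosed_seg (p q : ℝ × ℝ) : IsClosed (segment ℝ p q) := by
  rw [segment_eq_image_lineMap]
  exact (isCompact_Icc.image (by fun_prop)).isClosed

lemma sub_or_disj {S R : Set (ℝ × ℝ)} (hS : IsPreconnected S) (hR : IsClosed R)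
    (h : ∀ x ∈ S, x ∉ frontier R) : (∀ x ∈ S, x ∈ R) ∨ (∀ x ∈ S, x ∉ R) := by
  have hh := isPreconnected_iff_subset_of_disjoint.mp hS (interior R) Rᶜ isOpen_interior
    hR.isOpen_compl ?_ ?_
  · rcases hh with h | h
    · left; exact fun x hx => interior_subset (h hx)
    · right; exact fun x hx => h hx
  · intro x hx
    by_cases hxR : x ∈ R
    · left
      by_contra hc
      exact h x hx ⟨subset_closure hxR, hc⟩
    · right; exact hxR
  · ext x
    simp only [Set.mem_inter_iff, Set.mem_compl_iff, Set.mem_empty_iff_false, iff_false]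
    rintro ⟨_, h1, h2⟩
    exact h2 (interior_subset h1)

namespace Good

variable {n : ℕ} {v : ℕ → ℝ × ℝ} {R : Set (ℝ × ℝ)}

lemma chain_coe_zero (G : Good n v R) (a : ℕ) {x : ℝ × ℝ} (hx : ∀ k, a ≤ k → k ≤ a + n → x ≠ v k) :
    (chainAng v a (a + n) x : Real.Angle) = 0 := by
  rw [chainAng_coe (by omega) hx, G.per, sub_self]

lemma ne_of_notMem (G : Good n v R) {x : ℝ × ℝ} (hx : x ∉ frontier R) (k : ℕ) : x ≠ v k := by
  rintro rfl
  exact hx (G.fr k (left_mem_segment ℝ _ _))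

lemma chain_const (G : Good n v R) (a : ℕ) {S : Set (ℝ × ℝ)} (hS : IsPreconnected S)
    (h : ∀ x ∈ S, x ∉ frontier R) {x y : ℝ × ℝ} (hx : x ∈ S) (hy : y ∈ S) :
    chainAng v a (a + n) x = chainAng v a (a + n) y := by
  refine const_of_coe_zero hS ?_ ?_ hx hy
  · intro z hz
    exact (chainAng_cont fun k _ _ hk => h z hz (G.fr k hk)).continuousWithinAt
  · intro z hz
    exact G.chain_coe_zero a fun k _ _ => G.ne_of_notMem (h z hz) k

lemma cos_pm (G : Good n v R) (a : ℕ) {x : ℝ × ℝ} (hx : x ∉ frontier R) :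
    Real.cos (chainAng v a (a + n) x / 2) = 1 ∨ Real.cos (chainAng v a (a + n) x / 2) = -1 := by
  have := G.chain_coe_zero a fun k _ _ => G.ne_of_notMem hx k
  rw [← Real.Angle.coe_zero, Real.Angle.angle_eq_iff_two_pi_dvd_sub] at this
  obtain ⟨k, hk⟩ := this
  have : chainAng v a (a + n) x / 2 = k * Real.pi := by linarith
  rw [this, Real.cos_int_mul_pi]
  rcases Int.even_or_odd k with h | h
  · left; exact h.neg_one_zpow
  · right; exact h.neg_one_zpow

/-- parity of winding number corrected by the region indicator -/
def hpar (v : ℕ → ℝ × ℝ) (R : Set (ℝ × ℝ)) (n a : ℕ) (x : ℝ × ℝ) : ℝ :=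
  Real.cos (chainAng v a (a + n) x / 2) * (if x ∈ R then 1 else -1)

lemma hpar_pm (G : Good n v R) (a : ℕ) {x : ℝ × ℝ} (hx : x ∉ frontier R) :
    hpar v R n a x = 1 ∨ hpar v R n a x = -1 := by
  unfold hpar
  rcases G.cos_pm a hx with h | h <;> rw [h] <;> split_ifs <;> simp

lemma local_off (G : Good n v R) (a : ℕ) {z : ℝ × ℝ} (hz : z ∉ frontier R) :
    ∃ c, ∀ᶠ x in nhds z, x ∉ frontier R → hpar v R n a x = c := by
  have ho : (frontier R)ᶜ ∈ nhds z := isClosed_frontier.isOpen_compl.mem_nhds hz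
  obtain ⟨r, hr, hB⟩ := Metric.mem_nhds_iff.mp ho
  have hp := (convex_ball z r).isPreconnected
  refine ⟨hpar v R n a z, ?_⟩
  filter_upwards [Metric.ball_mem_nhds z hr] with x hx _
  unfold hpar
  rw [G.chain_const a hp hB hx (Metric.mem_ball_self hr)]
  rcases sub_or_disj hp G.closed hB with h | h
  · simp [h x hx, h z (Metric.mem_ball_self hr)]
  · simp [h x hx, h z (Metric.mem_ball_self hr)]

lemma convex_side (p q : ℝ × ℝ) : Convex ℝ {x | 0 < side p q x} := by
  intro x hx y hy s t hs ht hst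
  have e : side p q (s • x + t • y) = s * side p q x + t * side p q y := by
    obtain rfl : s = 1 - t := by linarith
    simp [side]; ring
  have hx' : 0 < side p q x := hx
  have hy' : 0 < side p q y := hy
  show 0 < side p q (s • x + t • y)
  rw [e]
  rcases hs.lt_or_eq with h | rfl
  · have := mul_pos h hx'
    have := mul_nonneg ht hy'.le
    linarith
  · obtain rfl : t = 1 := by linarith
    linarith

lemma local_on (G : Good n v R) (hcl : R ⊆ closure (interior R)) (a : ℕ) {z : ℝ × ℝ}
    (hz : z ∈ frontier R) (hzv : z ∉ Set.range v) :
    ∃ c, ∀ᶠ x in nhds z, x ∉ frontier R → hpar v R n a x = c := by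
  obtain ⟨k, hk1, hk2, hk⟩ := G.fr' a z hz
  have hne : ∀ j, z ≠ v j := fun j h => hzv ⟨j, h.symm⟩
  have hpq : v k ≠ v (k + 1) := by
    have := G.four
    exact G.inj _ _ (by omega) (by omega)
  have hko : z ∈ openSegment ℝ (v k) (v (k + 1)) :=
    mem_openSegment_of_ne_left_right (hne k).symm (hne _).symm hk
  have hoth : ∀ᶠ x in nhds z, ∀ j ∈ (Finset.Ico a (a + n)).erase k,
      x ∉ segment ℝ (v j) (v (j + 1)) := by
    rw [Filter.eventually_all_finset]
    intro j hj
    rw [Finset.mem_erase, Finset.mem_Ico] at hj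
    refine (isClosed_seg _ _).isOpen_compl.mem_nhds fun h => hj.1 ?_
    exact G.uniq hzv hj.2.1 hj.2.2 hk1 hk2 h hk
  have hvs : ∀ᶠ x in nhds z, ∀ j ∈ Finset.Icc a (a + n), x ≠ v j := by
    rw [Filter.eventually_all_finset]
    intro j _
    exact isOpen_ne.mem_nhds (hne j)
  let f : ℝ × ℝ → ℝ := fun x => ∑ j ∈ (Finset.Ico a (a + n)).erase k, ang (v j) (v (j + 1)) x
  have hfA : ∀ x, f x + ang (v k) (v (k + 1)) x = chainAng v a (a + n) x := fun x =>
    Finset.sum_erase_add _ _ (Finset.mem_Ico.mpr ⟨hk1, hk2⟩)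
  obtain ⟨c, hc⟩ := jump (f := f) hpq hko (by
    filter_upwards [hoth, hvs] with x h1 h2
    refine ⟨tendsto_finsetSum _ fun j hj => continuousAt_ang (h1 j hj), ?_⟩
    rw [hfA]
    exact G.chain_coe_zero a fun j hj1 hj2 => h2 j (Finset.mem_Icc.mpr ⟨hj1, hj2⟩))
  obtain ⟨r, hr, hB⟩ := Metric.eventually_nhds_iff_ball.mp (hc.and hoth)
  have hF : ∀ x ∈ Metric.ball z r, side (v k) (v (k + 1)) x ≠ 0 → x ∉ frontier R := by
    intro x hx hs hxF
    obtain ⟨j, hj1, hj2, hj⟩ := G.fr' a x hxF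
    by_cases hjk : j = k
    · subst hjk
      exact hs (side_zero hj)
    · exact (hB x hx).2 j (Finset.mem_erase.mpr ⟨hjk, Finset.mem_Ico.mpr ⟨hj1, hj2⟩⟩) hj
  have hP := sub_or_disj (S := Metric.ball z r ∩ {x | 0 < side (v k) (v (k + 1)) x})
    ((convex_ball z r).inter (convex_side _ _)).isPreconnected G.closed
    (fun x hx => hF x hx.1 (ne_of_gt hx.2))
  have hN := sub_or_disj (S := Metric.ball z r ∩ {x | 0 < side (v (k + 1)) (v k) x})
    ((convex_ball z r).inter (convex_side _ _)).isPreconnected G.closed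
    (fun x hx => hF x hx.1 (by
      have : 0 < side (v (k + 1)) (v k) x := hx.2
      rw [side_swap] at this
      linarith))
  have hneg : ∀ x, side (v k) (v (k + 1)) x < 0 → 0 < side (v (k + 1)) (v k) x := by
    intro x hx
    rw [side_swap]; linarith
  have hcos : Real.cos ((c - 2 * Real.pi) / 2) = - Real.cos (c / 2) := by
    rw [show (c - 2 * Real.pi) / 2 = c / 2 - Real.pi by ring, Real.cos_sub_pi]
  rcases hP with hP | hP <;> rcases hN with hN | hN
  · exfalso
    have : z ∈ interior R := by
      rw [mem_interior_iff_mem_nhds]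
      filter_upwards [Metric.ball_mem_nhds z hr] with x hx
      rcases lt_trichotomy 0 (side (v k) (v (k + 1)) x) with h | h | h
      · exact hP x ⟨hx, h⟩
      · exact G.closed.frontier_subset (G.fr k ((hB x hx).1.2.2 h.symm))
      · exact hN x ⟨hx, hneg x h⟩
    exact hz.2 this
  · refine ⟨Real.cos (c / 2), ?_⟩
    filter_upwards [Metric.ball_mem_nhds z hr] with x hx hxF
    have hxB := (hB x hx).1
    rw [hfA] at hxB
    unfold hpar
    rcases lt_trichotomy 0 (side (v k) (v (k + 1)) x) with h | h | h
    · rw [if_pos (hP x ⟨hx, h⟩), hxB.1 h, mul_one]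
    · exact absurd (G.fr k (hxB.2.2 h.symm)) hxF
    · rw [if_neg (hN x ⟨hx, hneg x h⟩), hxB.2.1 h, hcos]; ring
  · refine ⟨- Real.cos (c / 2), ?_⟩
    filter_upwards [Metric.ball_mem_nhds z hr] with x hx hxF
    have hxB := (hB x hx).1
    rw [hfA] at hxB
    unfold hpar
    rcases lt_trichotomy 0 (side (v k) (v (k + 1)) x) with h | h | h
    · rw [if_neg (hP x ⟨hx, h⟩), hxB.1 h]; ring
    · exact absurd (G.fr k (hxB.2.2 h.symm)) hxF
    · rw [if_pos (hN x ⟨hx, hneg x h⟩), hxB.2.1 h, hcos]; ring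
  · exfalso
    have hzc := hcl (G.closed.frontier_subset hz)
    obtain ⟨x, hx, hxR⟩ := mem_closure_iff.mp hzc _ Metric.isOpen_ball (Metric.mem_ball_self hr)
    rcases lt_trichotomy 0 (side (v k) (v (k + 1)) x) with h | h | h
    · exact hP x ⟨hx, h⟩ (interior_subset hxR)
    · exact (G.fr k ((hB x hx).1.2.2 h.symm)).2 hxR
    · exact hN x ⟨hx, hneg x h⟩ (interior_subset hxR)

lemma dense_off (G : Good n v R) {U : Set (ℝ × ℝ)} (hU : IsOpen U) (hne : U.Nonempty) :
    ∃ x ∈ U, x ∉ frontier R := by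
  by_contra hc
  push Not at hc
  have : U ⊆ interior (frontier R) := interior_maximal hc hU
  rw [interior_frontier G.closed] at this
  obtain ⟨x, hx⟩ := hne
  exact this hx

lemma hpar_const (G : Good n v R) (hcl : R ⊆ closure (interior R)) (a : ℕ) {x y : ℝ × ℝ}
    (hx : x ∉ frontier R) (hy : y ∉ frontier R) : hpar v R n a x = hpar v R n a y := by
  have hconn : IsPreconnected (Set.range v)ᶜ :=
    ((Set.countable_range v).isConnected_compl_of_one_lt_rank (by
      rw [← Module.finrank_eq_rank]; simp)).isPreconnected
  let U : ℝ → Set (ℝ × ℝ) := fun c => {z | ∀ᶠ x in nhds z, x ∉ frontier R → hpar v R n a x = c}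
  have hUo : ∀ c, IsOpen (U c) := fun c => isOpen_setOfPred_eventually_nhds
  have hdis : ∀ c d, (U c ∩ U d).Nonempty → c = d := by
    rintro c d ⟨z, h1, h2⟩
    obtain ⟨r, hr, hB⟩ := Metric.eventually_nhds_iff_ball.mp (Filter.Eventually.and h1 h2)
    obtain ⟨w, hw, hwF⟩ := G.dense_off (Metric.isOpen_ball (x := z) (ε := r))
      ⟨z, Metric.mem_ball_self hr⟩
    rw [← (hB w hw).1 hwF, ← (hB w hw).2 hwF]
  have hloc : ∀ z ∉ Set.range v, ∃ c, z ∈ U c := by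
    intro z hz
    by_cases hzF : z ∈ frontier R
    · exact G.local_on hcl a hzF hz
    · exact G.local_off a hzF
  have hself : ∀ z, z ∉ frontier R → z ∈ U (hpar v R n a z) := by
    intro z hz
    obtain ⟨c, hc⟩ := G.local_off a hz
    have := hc.self_of_nhds hz
    rw [this]
    exact hc
  have hcov : (Set.range v)ᶜ ⊆ U 1 ∪ U (-1) := by
    intro z hz
    obtain ⟨c, hc⟩ := hloc z hz
    have hc' : ∀ᶠ x in nhds z, x ∉ frontier R → hpar v R n a x = c := hc
    obtain ⟨r, hr, hB⟩ := Metric.eventually_nhds_iff_ball.mp hc'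
    obtain ⟨w, hw, hwF⟩ := G.dense_off (Metric.isOpen_ball (x := z) (ε := r))
      ⟨z, Metric.mem_ball_self hr⟩
    have := hB w hw hwF
    rcases G.hpar_pm a hwF with h | h
    · left; rw [← h, this]; exact hc
    · right; rw [← h, this]; exact hc
  have hxv : x ∈ (Set.range v)ᶜ := by
    rintro ⟨k, hk⟩
    exact G.ne_of_notMem hx k hk.symm
  have hyv : y ∈ (Set.range v)ᶜ := by
    rintro ⟨k, hk⟩
    exact G.ne_of_notMem hy k hk.symm
  have := isPreconnected_iff_subset_of_disjoint.mp hconn (U 1) (U (-1)) (hUo _) (hUo _) hcov (by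
    by_contra hne
    obtain ⟨z, _, hz⟩ := Set.nonempty_iff_ne_empty.mpr hne
    have := hdis 1 (-1) ⟨z, hz⟩
    norm_num at this)
  have fin : ∀ c, (Set.range v)ᶜ ⊆ U c → hpar v R n a x = hpar v R n a y := by
    intro c hc
    rw [hdis _ c ⟨x, hself x hx, hc hxv⟩, hdis _ c ⟨y, hself y hy, hc hyv⟩]
  rcases this with h | h
  · exact fin _ h
  · exact fin _ h

lemma cos_const (G : Good n v R) (hcl : R ⊆ closure (interior R)) (a : ℕ) {x y : ℝ × ℝ}
    (hx : x ∈ interior R) (hy : y ∈ interior R) :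
    Real.cos (chainAng v a (a + n) x / 2) = Real.cos (chainAng v a (a + n) y / 2) := by
  have := G.hpar_const hcl a (fun h => h.2 hx) (fun h => h.2 hy)
  simpa [hpar, interior_subset hx, interior_subset hy] using this

end Good

namespace Good

variable {n : ℕ} {v : ℕ → ℝ × ℝ} {R : Set (ℝ × ℝ)}

lemma vert_fr (G : Good n v R) (k : ℕ) : v k ∈ frontier R := G.fr k (left_mem_segment ℝ _ _)

lemma seg_cases {p q x : ℝ × ℝ} (h : x ∈ segment ℝ p q) :
    x = p ∨ x = q ∨ x ∈ openSegment ℝ p q := by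
  rw [← insert_endpoints_openSegment] at h
  simpa using h

lemma off_edge (G : Good n v R) {lo hi k : ℕ} (_h : lo < hi)
    (hd : openSegment ℝ (v hi) (v lo) ⊆ interior R) (hk1 : hi < k) (hk2 : k + 1 < lo + n)
    {x : ℝ × ℝ} (hx : x ∈ segment ℝ (v k) (v (k + 1))) : offLoop v lo hi x := by
  constructor
  · intro j hj1 hj2 hj
    exact G.non j k (by omega) (by omega) x hj hx
  · intro hs
    rcases seg_cases hs with e | e | e
    · rw [e, ← G.per hi] at hx
      exact G.vert (by omega) (by omega) hx
    · rw [e, ← G.per lo] at hx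
      exact G.vert (by omega) (by omega) hx
    · exact (G.fr k hx).2 (hd e)

lemma off_vert (G : Good n v R) {lo hi k : ℕ} (h : lo < hi)
    (hd : openSegment ℝ (v hi) (v lo) ⊆ interior R) (hk1 : hi < k) (hk2 : k < lo + n) :
    offLoop v lo hi (v k) := by
  constructor
  · intro j hj1 hj2 hj
    exact G.vert (by omega) (by omega) hj
  · intro hs
    rcases seg_cases hs with e | e | e
    · exact G.inj hi k hk1 (by omega) e.symm
    · exact G.inj lo k (by omega) (by omega) e.symm
    · exact (G.vert_fr k).2 (hd e)

lemma off_int (G : Good n v R) {lo hi : ℕ} {x : ℝ × ℝ} (hx : x ∈ interior R)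
    (hd : x ∉ openSegment ℝ (v hi) (v lo)) : offLoop v lo hi x := by
  constructor
  · intro j hj1 hj2 hj
    exact (G.fr j hj).2 hx
  · intro hs
    rcases seg_cases hs with e | e | e
    · exact (e ▸ G.vert_fr hi).2 hx
    · exact (e ▸ G.vert_fr lo).2 hx
    · exact hd e

lemma arc_const (G : Good n v R) {lo hi k l : ℕ} (h : lo < hi)
    (hd : openSegment ℝ (v hi) (v lo) ⊆ interior R) (hk1 : hi < k) (hkl : k ≤ l)
    (hl : l < lo + n) : wnd v lo hi (v k) = wnd v lo hi (v l) := by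
  induction l, hkl using Nat.le_induction with
  | base => rfl
  | succ m hm ih =>
    rw [ih (by omega)]
    exact wnd_const h (convex_segment (v m) (v (m + 1))).isPreconnected
      (fun x hx => G.off_edge h hd (by omega) hl hx)
      (left_mem_segment ℝ _ _) (right_mem_segment ℝ _ _)

lemma piece_val (G : Good n v R) {lo hi k l : ℕ} (h : lo < hi)
    (hd : openSegment ℝ (v hi) (v lo) ⊆ interior R) {O : Set (ℝ × ℝ)} (hO : IsPreconnected O)
    (hOR : O ⊆ interior R) (hOd : ∀ x ∈ O, x ∉ openSegment ℝ (v hi) (v lo))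
    (hk1 : hi < k) (hk2 : k < lo + n) (hk : v k ∈ closure O)
    (hl1 : hi < l) (hl2 : l < lo + n) {x : ℝ × ℝ} (hx : x ∈ O) :
    wnd v lo hi x = wnd v lo hi (v l) := by
  have e1 : wnd v lo hi x = wnd v lo hi (v k) := by
    have hpre : IsPreconnected (insert (v k) O) :=
      hO.subset_closure (Set.subset_insert _ _) (Set.insert_subset hk subset_closure)
    refine wnd_const h hpre ?_ (Set.mem_insert_of_mem _ hx) (Set.mem_insert _ _)
    intro y hy
    rcases Set.mem_insert_iff.mp hy with rfl | hy
    · exact G.off_vert h hd hk1 hk2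
    · exact G.off_int (hOR hy) (hOd y hy)
  rw [e1]
  rcases le_total k l with hkl | hkl
  · exact G.arc_const h hd hk1 hkl hl2
  · exact (G.arc_const h hd hl1 hkl hk2).symm

lemma wnd_add (G : Good n v R) {a b : ℕ} (h : a < b) (h' : b < a + n) {x : ℝ × ℝ}
    (hx : x ∉ segment ℝ (v b) (v a)) :
    wnd v a b x + wnd v b (a + n) x = chainAng v a (a + n) x := by
  have e : chainAng v a (a + n) x = chainAng v a b x + chainAng v b (a + n) x :=
    (Finset.sum_Ico_consecutive _ h.le h'.le).symm
  rw [wnd, wnd, G.per, e, ang_swap hx]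
  ring

lemma no_cross (G : Good n v R) {ι : Type} (O : ι → Set (ℝ × ℝ))
    (hO : ∀ t, IsPreconnected (O t)) (hOR : ∀ t, O t ⊆ interior R)
    (hcov : ∀ x ∈ R, ∃ t, x ∈ closure (O t))
    (hV : ∀ t a b, a < b → b < a + n → ∃ k, a < k ∧ k < a + n ∧ k ≠ b ∧ v k ∈ closure (O t))
    {a u b w : ℕ} (hau : a < u) (hub : u < b) (hbw : b < w) (hwa : w < a + n)
    (hd : openSegment ℝ (v b) (v a) ⊆ interior R)
    (hOd : ∀ t, ∀ x ∈ O t, x ∉ openSegment ℝ (v b) (v a))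
    (s : ι) (hsu : v u ∈ closure (O s)) (hsw : v w ∈ closure (O s)) : False := by
  have hcl : R ⊆ closure (interior R) := by
    intro x hx
    obtain ⟨t, ht⟩ := hcov x hx
    exact closure_mono (hOR t) ht
  have hd2 : openSegment ℝ (v (a + n)) (v b) ⊆ interior R := by
    rw [G.per, openSegment_symm]; exact hd
  have hOd2 : ∀ t, ∀ x ∈ O t, x ∉ openSegment ℝ (v (a + n)) (v b) := by
    rw [G.per, openSegment_symm]; exact hOd
  -- values on pieces
  have val1 : ∀ t k, b < k → k < a + n → v k ∈ closure (O t) → ∀ x ∈ O t,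
      wnd v a b x = wnd v a b (v w) := fun t k h1 h2 hk x hx =>
    G.piece_val (by omega) hd (hO t) (hOR t) (hOd t) h1 h2 hk hbw hwa hx
  have val2 : ∀ t k, a < k → k < b → v k ∈ closure (O t) → ∀ x ∈ O t,
      wnd v b (a + n) x = wnd v b (a + n) (v (u + n)) := fun t k h1 h2 hk x hx =>
    G.piece_val (k := k + n) (by omega) hd2 (hO t) (hOR t) (hOd2 t) (by omega) (by omega)
      (by rw [G.per]; exact hk) (by omega) (by omega) hx
  have hnseg : ∀ t, ∀ x ∈ O t, x ∉ segment ℝ (v b) (v a) := fun t x hx =>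
    (G.off_int (hOR t hx) (hOd t x hx)).2
  set p := wnd v a b (v w)
  set p' := wnd v b (a + n) (v (u + n))
  have hab : v b ≠ v a := (G.inj a b (by omega) (by omega)).symm
  -- midpoint
  let m : ℝ × ℝ := (1 / 2 : ℝ) • v b + (1 / 2 : ℝ) • v a
  have hm : m ∈ openSegment ℝ (v b) (v a) :=
    ⟨1 / 2, 1 / 2, by norm_num, by norm_num, by norm_num, rfl⟩
  obtain ⟨r, hr, hB⟩ := Metric.mem_nhds_iff.mp (isOpen_interior.mem_nhds (hd hm))
  have hBF : ∀ x ∈ Metric.ball m r, x ∉ frontier R := fun x hx h => h.2 (hB hx)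
  obtain ⟨c, hc⟩ := jump (f := chainAng v a b) hab hm (by
    filter_upwards [Metric.ball_mem_nhds m hr] with x hx
    have hxF := hBF x hx
    refine ⟨chainAng_cont fun k _ _ hk => hxF (G.fr k hk), ?_⟩
    rw [Real.Angle.coe_add, chainAng_coe (by omega) (fun k _ _ => G.ne_of_notMem hxF k),
      ang_coe (G.ne_of_notMem hxF _) (G.ne_of_notMem hxF _)]
    abel)
  obtain ⟨r', hr', hB'⟩ := Metric.eventually_nhds_iff_ball.mp
    (hc.and (Metric.ball_mem_nhds m hr))
  have hC : ∀ x ∈ Metric.ball m r', chainAng v a (a + n) x = chainAng v a (a + n) m :=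
    fun x hx => G.chain_const a (convex_ball m r).isPreconnected hBF (hB' x hx).2
      (Metric.mem_ball_self hr)
  have pick : ∀ q q' : ℝ × ℝ, q ≠ q' → m ∈ segment ℝ q q' →
      ∃ t, ∃ x ∈ O t, x ∈ Metric.ball m r' ∧ 0 < side q q' x := by
    intro q q' hq hmq
    have ho : IsOpen (Metric.ball m r' ∩ {x | 0 < side q q' x}) :=
      Metric.isOpen_ball.inter (isOpen_lt continuous_const (continuous_side q q'))
    obtain ⟨y, hy1, hy2⟩ := mem_closure_iff.mp (mem_closure_side hq hmq) _ Metric.isOpen_ball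
      (Metric.mem_ball_self hr')
    obtain ⟨t, ht⟩ := hcov y (interior_subset (hB (hB' y hy1).2))
    obtain ⟨x, hx, hxO⟩ := mem_closure_iff.mp ht _ ho ⟨hy1, hy2⟩
    exact ⟨t, x, hxO, hx.1, hx.2⟩
  obtain ⟨t1, x1, hx1, hb1, hs1⟩ := pick (v b) (v a) hab (openSegment_subset_segment ℝ _ _ hm)
  obtain ⟨t2, x2, hx2, hb2, hs2⟩ := pick (v a) (v b) hab.symm
    (by rw [segment_symm]; exact openSegment_subset_segment ℝ _ _ hm)
  rw [side_swap] at hs2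
  have w1 : wnd v a b x1 = c := (hB' x1 hb1).1.1 hs1
  have w2 : wnd v a b x2 = c - 2 * Real.pi := (hB' x2 hb2).1.2.1 (by linarith)
  have a1 := G.wnd_add (by omega) (by omega) (hnseg t1 x1 hx1)
  have a2 := G.wnd_add (by omega) (by omega) (hnseg t2 x2 hx2)
  rw [hC x1 hb1] at a1
  rw [hC x2 hb2] at a2
  have hOs : (O s).Nonempty := closure_nonempty_iff.mp ⟨_, hsu⟩
  obtain ⟨y, hy⟩ := hOs
  have a3 := G.wnd_add (by omega) (by omega) (hnseg s y hy)
  rw [val1 s w hbw hwa hsw y hy, val2 s u hau hub hsu y hy] at a3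
  have hcos := G.cos_const hcl a (hd hm) (hOR s hy)
  have hpm := G.cos_pm a (fun h => h.2 (hOR s hy))
  rw [← a3] at hcos hpm
  have alt : ∀ t, ∀ x ∈ O t, wnd v a b x = p ∨ wnd v b (a + n) x = p' := by
    intro t x hx
    obtain ⟨k, hk1, hk2, hkb, hk⟩ := hV t a b (by omega) (by omega)
    rcases lt_or_gt_of_ne hkb with h | h
    · right; exact val2 t k hk1 h hk x hx
    · left; exact val1 t k h hk2 hk x hx
  have hpi := Real.pi_pos
  have contra1 : chainAng v a (a + n) m = p + p' - 2 * Real.pi → False := by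
    intro h
    rw [h, show (p + p' - 2 * Real.pi) / 2 = (p + p') / 2 - Real.pi by ring,
      Real.cos_sub_pi] at hcos
    rcases hpm with h | h <;> rw [h] at hcos <;> norm_num at hcos
  have contra2 : chainAng v a (a + n) m = p + p' + 2 * Real.pi → False := by
    intro h
    rw [h, show (p + p' + 2 * Real.pi) / 2 = (p + p') / 2 + Real.pi by ring,
      Real.cos_add_pi] at hcos
    rcases hpm with h | h <;> rw [h] at hcos <;> norm_num at hcos
  rcases alt t1 x1 hx1 with h1 | h1 <;> rcases alt t2 x2 hx2 with h2 | h2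
  · linarith
  · exact contra1 (by linarith)
  · exact contra2 (by linarith)
  · linarith

end Good

/-- Purely combinatorial part: a non-crossing relation on `ℕ` is 3-colorable on intervals. -/
lemma color_interval (E : ℕ → ℕ → Prop)
    (hnc : ∀ i k j l, i < k → k < j → j < l → E i j → E k l → False) :
    ∀ m i j : ℕ, j - i ≤ m → i < j → ∀ ci cj : Fin 3, ci ≠ cj →
      ∃ c : ℕ → Fin 3, c i = ci ∧ c j = cj ∧
        ∀ x y, i ≤ x → x < y → y ≤ j → E x y → c x ≠ c y := by
  intro m
  induction m with
  | zero => intro i j h1 h2; omega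
  | succ m ih =>
    intro i j hm hij ci cj hc
    by_cases hj : j = i + 1
    · refine ⟨fun x => if x = i then ci else cj, by simp, by simp [hj], ?_⟩
      intro x y hx hxy hy _
      have : x = i := by omega
      have : y ≠ i := by omega
      simp [*]
    -- splitting vertex
    obtain ⟨k, hik, hkj, hsplit, hmax⟩ : ∃ k, i < k ∧ k < j ∧ (E i k ∨ k = i + 1) ∧
        ∀ l, k < l → l < j → ¬ E i l := by
      by_cases hex : ∃ k, (i < k ∧ k < j) ∧ E i k
      · have hfin : {k | (i < k ∧ k < j) ∧ E i k}.Finite :=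
          (Set.finite_Iio j).subset fun k hk => hk.1.2
        obtain ⟨k, hk, hkm⟩ := Set.exists_max_image _ id hfin hex
        refine ⟨k, hk.1.1, hk.1.2, Or.inl hk.2, fun l hl hlj hE => ?_⟩
        have := hkm l ⟨⟨lt_trans hk.1.1 hl, hlj⟩, hE⟩
        simp at this
        omega
      · push Not at hex
        exact ⟨i + 1, by omega, by omega, Or.inr rfl, fun l hl hlj => hex l ⟨by omega, hlj⟩⟩
    obtain ⟨ck, hck1, hck2⟩ : ∃ ck : Fin 3, ci ≠ ck ∧ ck ≠ cj := by
      revert ci cj; decide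
    obtain ⟨c1, h1i, h1k, h1⟩ := ih i k (by omega) hik ci ck hck1
    obtain ⟨c2, h2k, h2j, h2⟩ := ih k j (by omega) hkj ck cj hck2
    refine ⟨fun x => if x ≤ k then c1 x else c2 x, by simp [hik.le, h1i], by simp [hkj, h2j], ?_⟩
    intro x y hx hxy hy hE
    by_cases hyk : y ≤ k
    · simp only [hyk, if_true, (by omega : x ≤ k)]
      exact h1 x y hx hxy hyk hE
    · by_cases hxk : x ≤ k
      · simp only [hyk, hxk, if_true, if_false]
        rcases hxk.lt_or_eq with hlt | rfl
        · rcases hx.lt_or_eq with hix | rfl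
          · exfalso
            rcases hsplit with hs | hs
            · exact hnc i x k y hix hlt (by omega) hs hE
            · omega
          · by_cases hyj : y = j
            · subst hyj
              rw [h1i, h2j]; exact hc
            · exact absurd hE (hmax y (by omega) (by omega))
        · rw [h1k, ← h2k]
          exact h2 x y le_rfl hxy hy hE
      · simp only [hyk, hxk, if_false]
        exact h2 x y (by omega) hxy hy hE

lemma convex_side_nonneg (p q : ℝ × ℝ) : Convex ℝ {x | 0 ≤ side p q x} := by
  intro x hx y hy s t hs ht hst
  have e : side p q (s • x + t • y) = s * side p q x + t * side p q y := by
    obtain rfl : s = 1 - t := by linarith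
    simp [side]; ring
  have hx' : 0 ≤ side p q x := hx
  have hy' : 0 ≤ side p q y := hy
  show 0 ≤ side p q (s • x + t • y)
  rw [e]
  positivity

lemma side_notMem_interior {X : Set (ℝ × ℝ)} {p q r z : ℝ × ℝ} (hpq : p ≠ q)
    (hX : ∀ x ∈ X, x = p ∨ x = q ∨ x = r) (hz : z ∈ openSegment ℝ p q) :
    z ∉ interior (convexHull ℝ X) := by
  have key : ∀ p q : ℝ × ℝ, p ≠ q → (∀ x ∈ X, x = p ∨ x = q ∨ x = r) → z ∈ segment ℝ p q →
      0 ≤ side q p r → z ∉ interior (convexHull ℝ X) := by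
    intro p q hpq hX hz hr hzi
    have hsub : convexHull ℝ X ⊆ {x | 0 ≤ side q p x} := by
      refine convexHull_min ?_ (convex_side_nonneg q p)
      intro x hx
      rcases hX x hx with rfl | rfl | rfl
      · show 0 ≤ side q x x
        simp [side]
      · show 0 ≤ side x p x
        simp [side]
      · exact hr
    obtain ⟨y, hy1, hy2⟩ := mem_closure_iff.mp (mem_closure_side hpq hz) _ isOpen_interior hzi
    have h1 : 0 ≤ side q p y := hsub (interior_subset hy1)
    have h2 : 0 < side p q y := hy2
    rw [side_swap] at h1
    linarith
  have hz' := openSegment_subset_segment ℝ _ _ hz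
  rcases le_total 0 (side q p r) with h | h
  · exact key p q hpq hX hz' h
  · refine key q p hpq.symm (fun x hx => ?_) (by rw [segment_symm]; exact hz') ?_
    · rcases hX x hx with h | h | h <;> simp [h]
    · rw [side_swap]; linarith

section Idx

variable {n : ℕ} [NeZero n]

lemma ofNat_succ (k : ℕ) : Fin.ofNat n (k + 1) = Fin.ofNat n k + 1 := by
  apply Fin.ext
  simp [Fin.ofNat, Fin.val_add]

lemma ofNat_add (k : ℕ) : Fin.ofNat n (k + n) = Fin.ofNat n k := by
  apply Fin.ext
  simp [Fin.ofNat]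

lemma ofNat_ne {i j : ℕ} (h1 : i < j) (h2 : j < i + n) : Fin.ofNat n i ≠ Fin.ofNat n j := by
  intro h
  have h3 : i ≡ j [MOD n] := congrArg Fin.val h
  have := Nat.le_of_dvd (by omega) ((Nat.modEq_iff_dvd' h1.le).mp h3)
  omega

lemma ofNat_lift (a : ℕ) (i : Fin n) : ∃ k, a ≤ k ∧ k < a + n ∧ Fin.ofNat n k = i := by
  have hn : 0 < n := Nat.pos_of_ne_zero (NeZero.ne n)
  refine ⟨a + (i + n - a % n) % n, by omega, ?_, ?_⟩
  · have := Nat.mod_lt (i + n - a % n) hn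
    omega
  · apply Fin.ext
    have h1 := Nat.mod_lt a hn
    have h2 := Nat.div_add_mod a n
    have h3 : a + (i + n - a % n) = i + n + n * (a / n) := by omega
    have : (a + (i + n - a % n)) % n = i := by
      rw [h3, Nat.add_mul_mod_self_left, Nat.add_mod_right, Nat.mod_eq_of_lt i.isLt]
    simpa [Fin.ofNat] using this

lemma ofNat_val (i : Fin n) : Fin.ofNat n i.val = i := by
  apply Fin.ext
  simp [Fin.ofNat, Nat.mod_eq_of_lt i.isLt]

lemma good_of (P : SimplePolygon n) (h4 : 4 ≤ n) :
    Good n (fun k => P.vertex (Fin.ofNat n k)) P.region where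
  four := h4
  per k := by rw [ofNat_add]
  inj i j h1 h2 h := ofNat_ne h1 h2 (P.inj h)
  non i j h1 h2 x hx hx' := by
    rw [ofNat_succ] at hx hx'
    have := P.edges_noncross (Fin.ofNat n i) (Fin.ofNat n j) (ofNat_ne (by omega) (by omega))
      (by rw [← ofNat_succ]; exact ofNat_ne (by omega) (by omega))
      (by rw [← ofNat_succ]; exact (ofNat_ne (by omega) (by omega)).symm)
    exact Set.notMem_empty x (this ▸ ⟨hx, hx'⟩)
  closed := P.compact.isClosed
  fr k := by
    rw [ofNat_succ]; exact P.edges_boundary _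
  fr' a x hx := by
    obtain ⟨i, hi⟩ := Set.mem_iUnion.mp (P.frontier_sub hx)
    obtain ⟨k, h1, h2, rfl⟩ := ofNat_lift a i
    exact ⟨k, h1, h2, by rw [ofNat_succ]; exact hi⟩

lemma vertex_fr (P : SimplePolygon n) (i : Fin n) : P.vertex i ∈ frontier P.region :=
  P.edges_boundary i (left_mem_segment ℝ _ _)

lemma vertex_notMem_edge (P : SimplePolygon n) (h4 : 4 ≤ n) {i k : Fin n} (hk : k ≠ i)
    (hk' : k ≠ i + 1) : P.vertex k ∉ segment ℝ (P.vertex i) (P.vertex (i + 1)) := by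
  obtain ⟨m, h1, h2, rfl⟩ := ofNat_lift i.val k
  have hi := ofNat_val i
  have e1 : m ≠ i.val := by
    rintro rfl
    exact hk hi
  have e2 : m ≠ i.val + 1 := by
    rintro rfl
    rw [ofNat_succ, hi] at hk'
    exact hk' rfl
  have := (good_of P h4).vert (i := i.val) (j := m) (by omega) h2
  simpa only [ofNat_succ, hi] using this

lemma vertex_notMem_side (P : SimplePolygon n) (h4 : 4 ≤ n) {i j k : Fin n}
    (hs : P.sideOk i j) (hk : k ≠ i) (hk' : k ≠ j) :
    P.vertex k ∉ segment ℝ (P.vertex i) (P.vertex j) := by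
  rcases hs with rfl | rfl | hd
  · exact vertex_notMem_edge P h4 hk hk'
  · rw [segment_symm]
    exact vertex_notMem_edge P h4 hk' hk
  · intro h
    rcases Good.seg_cases h with e | e | e
    · exact hk (P.inj e)
    · exact hk' (P.inj e)
    · exact (vertex_fr P k).2 (hd.2 e)

lemma tri_interior (P : SimplePolygon n) (T : Triangulation P) (h4 : 4 ≤ n)
    {t : Fin n × Fin n × Fin n} (ht : t ∈ T.tris) : (interior (P.tri t)).Nonempty := by
  obtain ⟨d1, d2, d3⟩ := T.distinct t ht
  obtain ⟨s1, s2, s3⟩ := T.sides t ht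
  rw [SimplePolygon.tri, interior_convexHull_nonempty_iff_affineSpan_eq_top]
  have hnc : ¬ Collinear ℝ {P.vertex t.1, P.vertex t.2.1, P.vertex t.2.2} := by
    intro h
    rcases h.wbtw_or_wbtw_or_wbtw with h | h | h
    · exact vertex_notMem_side P h4 s3 d1.symm d2 (mem_segment_iff_wbtw.mpr h)
    · have h' := mem_segment_iff_wbtw.mpr h
      rw [segment_symm] at h'
      exact vertex_notMem_side P h4 s1 d3.symm d2.symm h'
    · have h' := mem_segment_iff_wbtw.mpr h
      rw [segment_symm] at h'
      exact vertex_notMem_side P h4 s2 d1 d3 h'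
  have hai := affineIndependent_iff_not_collinear_set.mpr hnc
  have := hai.affineSpan_eq_top_iff_card_eq_finrank_add_one.mpr (by simp)
  have hr : Set.range ![P.vertex t.1, P.vertex t.2.1, P.vertex t.2.2] =
      {P.vertex t.1, P.vertex t.2.1, P.vertex t.2.2} := by
    rw [Matrix.range_cons, Matrix.range_cons_cons_empty, Set.singleton_union]
  rwa [hr] at this

lemma tri_closure (P : SimplePolygon n) (T : Triangulation P) (h4 : 4 ≤ n)
    {t : Fin n × Fin n × Fin n} (ht : t ∈ T.tris) : P.tri t ⊆ closure (interior (P.tri t)) := by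
  have hc : Convex ℝ (P.tri t) := convex_convexHull ℝ _
  rw [hc.closure_interior_eq_closure_of_nonempty_interior (tri_interior P T h4 ht)]
  exact subset_closure

lemma vertex_mem_tri (P : SimplePolygon n) {t : Fin n × Fin n × Fin n} {i : Fin n}
    (hi : i ∈ triVerts t) : P.vertex i ∈ P.tri t := by
  apply subset_convexHull
  rcases hi with h | h | h <;> subst h <;> simp

lemma tri_third {t : Fin n × Fin n × Fin n} {i j : Fin n} (hi : i ∈ triVerts t)
    (hj : j ∈ triVerts t) (hij : i ≠ j) :
    ∃ k, ∀ l ∈ triVerts t, l = i ∨ l = j ∨ l = k := by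
  obtain ⟨a, b, c⟩ := t
  simp only [triVerts, Set.mem_insert_iff, Set.mem_singleton_iff] at hi hj ⊢
  by_cases h1 : a ≠ i ∧ a ≠ j
  · exact ⟨a, by grind⟩
  by_cases h2 : b ≠ i ∧ b ≠ j
  · exact ⟨b, by grind⟩
  · exact ⟨c, by grind⟩

lemma sideOk_symm {P : SimplePolygon n} {i j : Fin n} (h : P.sideOk i j) : P.sideOk j i := by
  rcases h with h | h | h
  · exact Or.inr (Or.inl h)
  · exact Or.inl h
  · exact Or.inr (Or.inr ⟨h.1.symm, by rw [openSegment_symm]; exact h.2⟩)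

lemma sideOk_of (P : SimplePolygon n) (T : Triangulation P) {t : Fin n × Fin n × Fin n}
    (ht : t ∈ T.tris) {i j : Fin n} (hi : i ∈ triVerts t) (hj : j ∈ triVerts t) (hij : i ≠ j) :
    P.sideOk i j := by
  obtain ⟨s1, s2, s3⟩ := T.sides t ht
  rcases hi with hi | hi | hi <;> rcases hj with hj | hj | hj <;> subst hi <;> subst hj
  · exact absurd rfl hij
  · exact s1
  · exact s3
  · exact sideOk_symm s1
  · exact absurd rfl hij
  · exact s2
  · exact sideOk_symm s3
  · exact sideOk_symm s2
  · exact absurd rfl hij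

/-- Triangle sides never cross combinatorially. -/
lemma tris_no_cross (P : SimplePolygon n) (T : Triangulation P)
    {a u b w : ℕ} (hau : a < u) (hub : u < b) (hbw : b < w) (hwn : w < n)
    {t s : Fin n × Fin n × Fin n} (ht : t ∈ T.tris) (hs : s ∈ T.tris)
    (hta : Fin.ofNat n a ∈ triVerts t) (htb : Fin.ofNat n b ∈ triVerts t)
    (hsu : Fin.ofNat n u ∈ triVerts s) (hsw : Fin.ofNat n w ∈ triVerts s) : False := by
  have h4 : 4 ≤ n := by omega
  have G := good_of P h4
  have hab : Fin.ofNat n a ≠ Fin.ofNat n b := ofNat_ne (by omega) (by omega)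
  have hd : openSegment ℝ (P.vertex (Fin.ofNat n b)) (P.vertex (Fin.ofNat n a)) ⊆
      interior P.region := by
    rcases sideOk_of P T ht htb hta hab.symm with h | h | h
    · rw [← ofNat_succ, ← ofNat_add a] at h
      exact absurd h.symm (ofNat_ne (by omega) (by omega))
    · rw [← ofNat_succ] at h
      exact absurd h.symm (ofNat_ne (by omega) (by omega))
    · exact h.2
  have hsubR : ∀ t ∈ T.tris, P.tri t ⊆ P.region := by
    intro t ht
    rw [← T.covers]
    exact Set.subset_biUnion_of_mem (u := fun t => P.tri t) ht
  refine G.no_cross (ι := {t // t ∈ T.tris}) (fun t => interior (P.tri t.1)) ?_ ?_ ?_ ?_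
    hau hub hbw (by omega) hd ?_ ⟨s, hs⟩ (tri_closure P T h4 hs (vertex_mem_tri P hsu))
    (tri_closure P T h4 hs (vertex_mem_tri P hsw))
  · intro t
    exact (convex_convexHull ℝ _).interior.isPreconnected
  · intro t
    exact interior_mono (hsubR t.1 t.2)
  · intro x hx
    rw [← T.covers] at hx
    obtain ⟨t, ht, hx⟩ := Set.mem_iUnion₂.mp hx
    exact ⟨⟨t, ht⟩, tri_closure P T h4 ht hx⟩
  · rintro ⟨t, ht⟩ a b hab hba
    obtain ⟨i, hi, hia, hib⟩ : ∃ i ∈ triVerts t, i ≠ Fin.ofNat n a ∧ i ≠ Fin.ofNat n b := by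
      obtain ⟨d1, d2, d3⟩ := T.distinct t ht
      have m1 : t.1 ∈ triVerts t := by simp [triVerts]
      have m2 : t.2.1 ∈ triVerts t := by simp [triVerts]
      have m3 : t.2.2 ∈ triVerts t := by simp [triVerts]
      by_contra hc
      push Not at hc
      have c1 := hc _ m1
      have c2 := hc _ m2
      have c3 := hc _ m3
      grind
    obtain ⟨k, h1, h2, rfl⟩ := ofNat_lift a i
    refine ⟨k, ?_, h2, ?_, tri_closure P T h4 ht (vertex_mem_tri P hi)⟩
    · rcases h1.lt_or_eq with h | rfl
      · exact h
      · exact absurd rfl hia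
    · rintro rfl
      exact hib rfl
  · rintro ⟨t', ht'⟩ x hx hxd
    have hxt : x ∈ P.tri t :=
      (convex_convexHull ℝ _).openSegment_subset (vertex_mem_tri P htb) (vertex_mem_tri P hta) hxd
    obtain ⟨y, hy1, hy2⟩ := mem_closure_iff.mp (tri_closure P T h4 ht hxt) _ isOpen_interior hx
    have htt : t' = t := by
      by_contra hne
      have := T.int_disjoint t' ht' t ht hne
      exact Set.notMem_empty y (this ▸ ⟨hy1, hy2⟩)
    subst htt
    obtain ⟨k, hk⟩ := tri_third htb hta hab.symm
    refine side_notMem_interior (r := P.vertex k) (fun h => hab (P.inj h).symm) ?_ hxd hx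
    have hk1 := hk t'.1 (by simp [triVerts])
    have hk2 := hk t'.2.1 (by simp [triVerts])
    have hk3 := hk t'.2.2 (by simp [triVerts])
    intro z hz
    simp only [Set.mem_insert_iff, Set.mem_singleton_iff] at hz
    rcases hz with rfl | rfl | rfl
    · rcases hk1 with h | h | h <;> rw [h] <;> simp
    · rcases hk2 with h | h | h <;> rw [h] <;> simp
    · rcases hk3 with h | h | h <;> rw [h] <;> simp

lemma succ_val {i j : Fin n} (h : j = i + 1) : j.val = i.val + 1 ∨ (j.val = 0 ∧ i.val + 1 = n) := by
  have hi := i.isLt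
  rw [← ofNat_val i, ← ofNat_succ] at h
  have hv : j.val = (i.val + 1) % n := congrArg Fin.val h
  by_cases hl : i.val + 1 < n
  · left; rw [hv, Nat.mod_eq_of_lt hl]
  · right
    have : i.val + 1 = n := by omega
    rw [this, Nat.mod_self] at hv
    exact ⟨hv, this⟩

lemma adj_tri {P : SimplePolygon n} (T : Triangulation P) {i j : Fin n}
    (h : (polyGraph T).Adj i j) (h1 : i.val + 1 < j.val) (h2 : 0 < i.val ∨ j.val + 1 < n) :
    ∃ t ∈ T.tris, i ∈ triVerts t ∧ j ∈ triVerts t := by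
  rw [polyGraph, SimpleGraph.fromRel_adj] at h
  rcases h.2 with (h | h) | (h | ⟨t, ht, h3, h4⟩)
  · have := succ_val h; omega
  · exact h
  · have := succ_val h; omega
  · exact ⟨t, ht, h4, h3⟩

end Idx

/-- Every maximal outerplanar graph (the graph of a triangulated simple
polygon on `n ≥ 3` vertices) is properly 3-colorable. -/
theorem polyGraph_three_colorable {n : ℕ} [NeZero n] (P : SimplePolygon n)
    (T : Triangulation P) :
    Nonempty ((polyGraph T).Coloring (Fin 3)) := by
  have h3 := P.nondeg
  let E : ℕ → ℕ → Prop := fun i j =>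
    ∃ (hi : i < n) (hj : j < n), (polyGraph T).Adj ⟨i, hi⟩ ⟨j, hj⟩
  obtain ⟨c, -, -, hc⟩ := color_interval E (by
    rintro i k j l hik hkj hjl ⟨hi, hj, h1⟩ ⟨hk, hl, h2⟩
    obtain ⟨t, ht, ht1, ht2⟩ := adj_tri T h1 (by simp; omega) (by right; simp; omega)
    obtain ⟨s, hs, hs1, hs2⟩ := adj_tri T h2 (by simp; omega) (by left; simp; omega)
    rw [← ofNat_val ⟨i, hi⟩] at ht1
    rw [← ofNat_val ⟨j, hj⟩] at ht2
    rw [← ofNat_val ⟨k, hk⟩] at hs1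
    rw [← ofNat_val ⟨l, hl⟩] at hs2
    exact tris_no_cross P T hik hkj hjl hl ht hs ht1 ht2 hs1 hs2) n 0 (n - 1) (by omega)
    (by omega) 0 1 (by decide)
  refine ⟨SimpleGraph.Coloring.mk (fun x => c x.val) ?_⟩
  intro x y hxy
  have hx := x.isLt
  have hy := y.isLt
  have hne : x.val ≠ y.val := fun h => hxy.ne (Fin.ext h)
  rcases lt_or_gt_of_ne hne with h | h
  · exact hc x.val y.val (by omega) h (by omega) ⟨hx, hy, hxy⟩
  · exact (hc y.val x.val (by omega) h (by omega) ⟨hy, hx, hxy.symm⟩).symm
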